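/- arXiv:2406.06268 — 3 statements merged into one kernel-verified Lean document; each statement's English description precedes it below -/
import Mathlib

section
/- Let m₁, m₂ ≥ 1 be integers, p ∈ [1, ∞], α > 0, and let 0 < θ₀ < π/2 be fixed. Let f : (0,∞) → [0,∞) be measurable, vanishing outside (0, α], and satisfying ∫₀^{α} f(t) Φ(iρ_p, t) Δ(t) dt < ∞. Then for every λ ∈ ℝ with |λ| α ≤ θ₀ one has cos(θ₀) · ∫₀^{α} f(t) Φ(iρ_p, t) Δ(t) dt ≤ | ∫₀^{α} f(t) Φ(λ + iρ_p, t) Δ(t) dt | ≤ ∫₀^{α} f(t) Φ(iρ_p, t) Δ(t) dt; in particular the spherical transform of f at λ + iρ_p is comparable, with constants depending only on θ₀, to ∫₀^{α} f(t) Φ(iρ_p, t) Δ(t) dt. -/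
/-!
For real `r` one has `|cos (z r)| ≤ cosh (Im z · r)` and
`Re cos (z r) = cos (Re z · r) cosh (Im z · r)`, while `cosh (q r) = cos (i q r)`. Hence if
`c ≤ cos (Re z · r)` for all `r` in `(0, t]`, then `g = cos (z r)` and the positive number
`k = cos (i Im z · r)` satisfy `|g| ≤ k` and `c k ≤ Re g`. These two inequalities define a convex
cone of pairs `(g, k)`, so they survive multiplication by non-negative weights and integration, the
only operations that lead from the cosine to `Φ(z, t)` and on to the spherical transform. The
analytic work lies in the convergence of the Koornwinder integrals, where
`(x² - y²) / 2 ≤ cosh x - cosh y` reduces the singular weights to powers.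
-/

open Set intervalIntegral MeasureTheory

/-- The density `Δ(t) = (2 sinh t)^{m₁+m₂} (2 cosh t)^{m₂}`. -/
noncomputable def Δ (m₁ m₂ : ℕ) (t : ℝ) : ℝ :=
  (2 * Real.sinh t) ^ (m₁ + m₂) * (2 * Real.cosh t) ^ m₂

/-- The constant `c₀ = √π 2^{m₂/2-2} Γ((n-1)/2)/Γ(n/2)`, `n = m₁+m₂+1`. -/
noncomputable def c₀ (m₁ m₂ : ℕ) : ℝ :=
  Real.sqrt Real.pi * 2 ^ ((m₂ : ℝ)/2 - 2) *
    Real.Gamma (((m₁ : ℝ) + m₂ + 1 - 1)/2) / Real.Gamma (((m₁ : ℝ) + m₂ + 1)/2)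

/-- The half-sum of positive roots `ρ = (m₁ + 2m₂)/2`. -/
noncomputable def ρ₀ (m₁ m₂ : ℕ) : ℝ := ((m₁ : ℝ) + 2 * m₂) / 2

/-- `ρ_p = (2/p - 1) ρ` for `p ∈ [1,∞]` (for `p = ∞` this is `-ρ`). -/
noncomputable def rhoP (m₁ m₂ : ℕ) (p : ENNReal) : ℝ := (2 / p.toReal - 1) * ρ₀ m₁ m₂

/-- The Koornwinder integral representation of the elementary spherical function
`φ_z(a_t)`, `z ∈ ℂ`. -/
noncomputable def PhiC (m₁ m₂ : ℕ) (z : ℂ) (t : ℝ) : ℂ :=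
  ((c₀ m₁ m₂ * Real.sinh (2*t) / Δ m₁ m₂ t : ℝ) : ℂ) *
    ∫ s in (0:ℝ)..t,
      (((Real.cosh (2*t) - Real.cosh (2*s)) ^ ((m₂ : ℝ)/2 - 1) : ℝ) : ℂ) *
      (∫ r in (0:ℝ)..s,
        (((Real.cosh s - Real.cosh r) ^ ((m₁ : ℝ)/2 - 1) : ℝ) : ℂ) * Complex.cos (z * r)) *
      ((Real.sinh s : ℝ) : ℂ)

/-! ### Complex cosine and parametrised integrals -/

lemma norm_cos_le_cosh_im (z : ℂ) : ‖Complex.cos z‖ ≤ Real.cosh z.im := by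
  have h := norm_add_le (Complex.exp (z * Complex.I)) (Complex.exp (-z * Complex.I))
  simp only [Complex.norm_exp, Complex.mul_I_re, Complex.neg_im, neg_neg] at h
  rw [Complex.cos, norm_div, Complex.norm_ofNat, Real.cosh_eq, add_comm (Real.exp z.im)]
  exact div_le_div_of_nonneg_right h zero_le_two

lemma re_cos (z : ℂ) : (Complex.cos z).re = Real.cos z.re * Real.cosh z.im := by
  rw [Complex.cos_eq, ← Complex.ofReal_cos, ← Complex.ofReal_cosh, ← Complex.ofReal_sin,
    ← Complex.ofReal_sinh, ← Complex.ofReal_mul, ← Complex.ofReal_mul, Complex.sub_re,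
    Complex.re_ofReal_mul, Complex.I_re, mul_zero, sub_zero, Complex.ofReal_re]

lemma cos_le_cos_mul_of_abs_mul_le {x α θ r : ℝ} (hθ : θ ≤ Real.pi) (h : |x| * α ≤ θ)
    (hr : r ∈ Ioc 0 α) : Real.cos θ ≤ Real.cos (x * r) := by
  have hxr : |x * r| ≤ θ := by
    rw [abs_mul, abs_of_pos hr.1]
    exact (mul_le_mul_of_nonneg_left hr.2 (abs_nonneg x)).trans h
  rw [← Real.cos_abs (x * r)]
  exact Real.cos_le_cos_of_nonneg_of_le_pi (abs_nonneg _) hθ hxr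

lemma stronglyMeasurable_intervalIntegral {X E : Type*} [MeasurableSpace X]
    [NormedAddCommGroup E] [NormedSpace ℝ E] {μ : Measure ℝ} [SFinite μ] {f : X → ℝ → E}
    (hf : StronglyMeasurable (Function.uncurry f)) {a b : X → ℝ} (ha : Measurable a)
    (hb : Measurable b) : StronglyMeasurable fun x => ∫ y in a x..b x, f x y ∂μ := by
  have integral_Ioc {a b : X → ℝ} (ha : Measurable a) (hb : Measurable b) :
      StronglyMeasurable fun x => ∫ y in Ioc (a x) (b x), f x y ∂μ := by
    have hS : MeasurableSet {q : X × ℝ | q.2 ∈ Ioc (a q.1) (b q.1)} :=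
      (measurableSet_lt (ha.comp measurable_fst) measurable_snd).inter
        (measurableSet_le measurable_snd (hb.comp measurable_fst))
    simp only [← MeasureTheory.integral_indicator measurableSet_Ioc]
    exact (hf.indicator hS).integral_prod_right'
  exact (integral_Ioc ha hb).sub (integral_Ioc hb ha)

/-! ### Comparable pairs -/

/-- `ReComparable c g k` says that `g` is comparable to the real part of `k`: it is bounded by it in
norm, and its own real part is at least `c` times it. Only `k.re` matters; `k` is complex so that
`g` and `k` may be values of one complex integral at two parameters. -/
structure ReComparable (c : ℝ) (g k : ℂ) : Prop where
  norm_le : ‖g‖ ≤ k.re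
  mul_re_le : c * k.re ≤ g.re

namespace ReComparable

variable {c : ℝ}

lemma ofReal_mul {g k : ℂ} (h : ReComparable c g k) {w : ℝ} (hw : 0 ≤ w) :
    ReComparable c (w * g) (w * k) where
  norm_le := by
    rw [norm_mul, Complex.norm_of_nonneg hw, Complex.re_ofReal_mul]
    exact mul_le_mul_of_nonneg_left h.norm_le hw
  mul_re_le := by
    rw [Complex.re_ofReal_mul, Complex.re_ofReal_mul, mul_left_comm]
    exact mul_le_mul_of_nonneg_left h.mul_re_le hw

lemma mul_ofReal {g k : ℂ} (h : ReComparable c g k) {w : ℝ} (hw : 0 ≤ w) :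
    ReComparable c (g * w) (k * w) := by
  simpa only [mul_comm] using h.ofReal_mul hw

lemma integral {X : Type*} [MeasurableSpace X] {μ : Measure X} {g k : X → ℂ}
    (hg : AEStronglyMeasurable g μ) (hk : Integrable k μ)
    (h : ∀ᵐ x ∂μ, ReComparable c (g x) (k x)) :
    ReComparable c (∫ x, g x ∂μ) (∫ x, k x ∂μ) := by
  have hg_int : Integrable g μ := hk.re.mono' hg (h.mono fun _ hx => hx.norm_le)
  have hk_re : ∫ x, (k x).re ∂μ = (∫ x, k x ∂μ).re := integral_re hk
  have hg_re : ∫ x, (g x).re ∂μ = (∫ x, g x ∂μ).re := integral_re hg_int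
  constructor
  · rw [← hk_re]
    exact norm_integral_le_of_norm_le hk.re (h.mono fun _ hx => hx.norm_le)
  · rw [← hk_re, ← hg_re, ← MeasureTheory.integral_const_mul]
    exact integral_mono_ae (hk.re.const_mul c) hg_int.re (h.mono fun _ hx => hx.mul_re_le)

lemma intervalIntegral {μ : Measure ℝ} {a b : ℝ} (hab : a ≤ b) {g k : ℝ → ℂ}
    (hg : IntervalIntegrable g μ a b) (hk : IntervalIntegrable k μ a b)
    (h : ∀ x ∈ Ioc a b, ReComparable c (g x) (k x)) :
    ReComparable c (∫ x in a..b, g x ∂μ) (∫ x in a..b, k x ∂μ) := by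
  rw [integral_of_le hab, integral_of_le hab]
  exact integral hg.aestronglyMeasurable hk.1 (ae_restrict_of_forall_mem measurableSet_Ioc h)

end ReComparable

lemma reComparable_cos_mul {c r : ℝ} {z : ℂ} (hc : c ≤ Real.cos (z.re * r)) :
    ReComparable c (Complex.cos (z * r)) (Complex.cos (Complex.I * z.im * r)) where
  norm_le := by simpa [re_cos] using norm_cos_le_cosh_im (z * r)
  mul_re_le := by
    simpa [re_cos] using mul_le_mul_of_nonneg_right hc (Real.cosh_pos (z.im * r)).le

/-! ### The weight `(cosh x - cosh y) ^ a` -/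

lemma sq_sub_sq_div_two_le_cosh_sub_cosh {x y : ℝ} (h : |y| ≤ |x|) :
    (x ^ 2 - y ^ 2) / 2 ≤ Real.cosh x - Real.cosh y := by
  have sinh_product {u v : ℝ} :
      Real.cosh (u + v) - Real.cosh (u - v) = 2 * (Real.sinh u * Real.sinh v) := by
    rw [Real.cosh_add, Real.cosh_sub]
    ring
  have hu : 0 ≤ (|x| + |y|) / 2 := by positivity
  have hv : 0 ≤ (|x| - |y|) / 2 := by linarith
  calc (x ^ 2 - y ^ 2) / 2 = 2 * ((|x| + |y|) / 2 * ((|x| - |y|) / 2)) := by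
        rw [← sq_abs x, ← sq_abs y]
        ring
    _ ≤ 2 * (Real.sinh ((|x| + |y|) / 2) * Real.sinh ((|x| - |y|) / 2)) := by
        gcongr <;> rwa [Real.self_le_sinh_iff]
    _ = Real.cosh x - Real.cosh y := by
        rw [← sinh_product, ← Real.cosh_abs x, ← Real.cosh_abs y]
        ring_nf

lemma cosh_sub_cosh_rpow_nonneg (a : ℝ) {x y : ℝ} (hy : 0 ≤ y) (hxy : y ≤ x) :
    0 ≤ (Real.cosh x - Real.cosh y) ^ a :=
  Real.rpow_nonneg (sub_nonneg.2 (Real.cosh_le_cosh.2 (abs_le_abs_of_nonneg hy hxy))) a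

lemma rpow_le_rpow_max_mul_rpow_min {d x M : ℝ} (a : ℝ) (hd : 0 < d) (hdx : d ≤ x)
    (hxM : x ≤ M) : x ^ a ≤ M ^ max a 0 * d ^ min a 0 := by
  have hx : 0 < x := hd.trans_le hdx
  calc x ^ a = x ^ max a 0 * x ^ min a 0 := by
        rw [← Real.rpow_add hx, max_add_min, add_zero]
    _ ≤ M ^ max a 0 * d ^ min a 0 :=
        mul_le_mul (Real.rpow_le_rpow hx.le hxM (le_max_right a 0))
          (Real.rpow_le_rpow_of_nonpos hd hdx (min_le_right a 0))
          (Real.rpow_nonneg hx.le _) (Real.rpow_nonneg (hx.le.trans hxM) _)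

lemma cosh_sub_cosh_rpow_le (a : ℝ) {x y : ℝ} (hy : 0 ≤ y) (hxy : y < x) :
    (Real.cosh x - Real.cosh y) ^ a ≤
      Real.cosh x ^ max a 0 * (x / 2) ^ min a 0 * (x - y) ^ min a 0 := by
  have hx : 0 < x / 2 := by linarith
  have hsub : 0 < x - y := sub_pos.2 hxy
  have hd : x / 2 * (x - y) ≤ Real.cosh x - Real.cosh y := by
    have := sq_sub_sq_div_two_le_cosh_sub_cosh (abs_le_abs_of_nonneg hy hxy.le)
    nlinarith [mul_nonneg hy hsub.le]
  rw [mul_assoc, ← Real.mul_rpow hx.le hsub.le]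
  exact rpow_le_rpow_max_mul_rpow_min a (mul_pos hx hsub) hd
    (sub_le_self _ (Real.cosh_pos y).le)

lemma intervalIntegrable_sub_rpow {a : ℝ} (ha : -1 < a) (x : ℝ) :
    IntervalIntegrable (fun y => (x - y) ^ a) volume 0 x := by
  simpa using ((intervalIntegrable_rpow' (a := 0) (b := x) ha).comp_sub_left x).symm

lemma integral_sub_rpow {a : ℝ} (ha : -1 < a) (x : ℝ) :
    ∫ y in (0 : ℝ)..x, (x - y) ^ a = x ^ (a + 1) / (a + 1) := by
  rw [integral_comp_sub_left (fun y => y ^ a), sub_self, sub_zero, integral_rpow (Or.inl ha),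
    Real.zero_rpow (by linarith), sub_zero]

lemma intervalIntegrable_cosh_sub_cosh_rpow {a x : ℝ} (ha : -1 < a) (hx : 0 ≤ x) :
    IntervalIntegrable (fun y => (Real.cosh x - Real.cosh y) ^ a) volume 0 x := by
  have hdom := (intervalIntegrable_sub_rpow (lt_min ha neg_one_lt_zero) x).const_mul
    (Real.cosh x ^ max a 0 * (x / 2) ^ min a 0)
  rw [intervalIntegrable_iff_integrableOn_Ioo_of_le hx] at hdom ⊢
  refine hdom.mono' (Measurable.aestronglyMeasurable (by fun_prop))
    (ae_restrict_of_forall_mem measurableSet_Ioo fun y hy => ?_)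
  rw [Real.norm_of_nonneg (cosh_sub_cosh_rpow_nonneg a hy.1.le hy.2.le)]
  exact cosh_sub_cosh_rpow_le a hy.1.le hy.2

lemma integral_cosh_sub_cosh_rpow_le {a x : ℝ} (ha : -1 < a) (hx : 0 ≤ x) :
    ∫ y in (0 : ℝ)..x, (Real.cosh x - Real.cosh y) ^ a ≤
      Real.cosh x ^ max a 0 * (x / 2) ^ min a 0 * (x ^ (min a 0 + 1) / (min a 0 + 1)) := by
  have hmin : -1 < min a 0 := lt_min ha neg_one_lt_zero
  rw [← integral_sub_rpow hmin, ← intervalIntegral.integral_const_mul]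
  exact integral_mono_on_of_le_Ioo hx (intervalIntegrable_cosh_sub_cosh_rpow ha hx)
    ((intervalIntegrable_sub_rpow hmin x).const_mul _)
    fun y hy => cosh_sub_cosh_rpow_le a hy.1.le hy.2

lemma bddAbove_integral_cosh_sub_cosh_rpow {a : ℝ} (ha : -(1 / 2) ≤ a) (T : ℝ) :
    BddAbove ((fun x => ∫ y in (0 : ℝ)..x, (Real.cosh x - Real.cosh y) ^ a) '' Icc 0 T) := by
  set b := min a 0 with hb
  have hb_half : 0 ≤ 2 * b + 1 := by
    have : -(1 / 2) ≤ b := le_min ha (by norm_num)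
    linarith
  have hcont : Continuous fun x : ℝ =>
      Real.cosh x ^ max a 0 * (x ^ (2 * b + 1) / (2 ^ b * (b + 1))) := by
    have hcosh := Real.continuous_cosh.rpow_const fun x => Or.inr (le_max_right a 0)
    exact hcosh.mul ((Real.continuous_rpow_const hb_half).div_const _)
  obtain ⟨B, hB⟩ := (isCompact_Icc (a := 0) (b := T)).bddAbove_image hcont.continuousOn
  refine ⟨B ⊔ 0, forall_mem_image.2 fun x hx => ?_⟩
  rcases hx.1.eq_or_lt with rfl | hx0
  · simp
  · have hpow : (x / 2) ^ b * (x ^ (b + 1) / (b + 1)) = x ^ (2 * b + 1) / (2 ^ b * (b + 1)) := by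
      rw [Real.div_rpow hx0.le zero_le_two, div_mul_div_comm, ← Real.rpow_add hx0]
      ring_nf
    refine ((integral_cosh_sub_cosh_rpow_le (by linarith) hx.1).trans ?_).trans le_sup_left
    rw [← hb, mul_assoc, hpow]
    exact hB (mem_image_of_mem _ hx)

/-! ### The Koornwinder integrals -/

/-- The Abel-type transform `∫₀ˢ (cosh s - cosh r)^a g(r) dr`. With `a = m₁/2 - 1` and
`g(r) = cos (z r)` it is the inner integral of the Koornwinder formula. -/
noncomputable def coshAbel (a : ℝ) (g : ℝ → ℂ) (s : ℝ) : ℂ :=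
  ∫ r in (0 : ℝ)..s, (((Real.cosh s - Real.cosh r) ^ a : ℝ) : ℂ) * g r

section CoshAbel

variable {a b : ℝ} {g k : ℝ → ℂ}

lemma stronglyMeasurable_coshAbel (a : ℝ) (hg : Measurable g) :
    StronglyMeasurable (coshAbel a g) :=
  stronglyMeasurable_intervalIntegral (Measurable.stronglyMeasurable (by fun_prop))
    measurable_const measurable_id

lemma intervalIntegrable_coshAbel (ha : -1 < a) (hg : Continuous g) {s : ℝ} (hs : 0 ≤ s) :
    IntervalIntegrable (fun r => (((Real.cosh s - Real.cosh r) ^ a : ℝ) : ℂ) * g r) volume 0 s :=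
  have hw := intervalIntegrable_cosh_sub_cosh_rpow ha hs
  IntervalIntegrable.mul_continuousOn ⟨hw.1.ofReal, hw.2.ofReal⟩ hg.continuousOn

lemma norm_coshAbel_le {C s : ℝ} (ha : -1 < a) (hs : 0 ≤ s) (hg : ∀ r ∈ Ioc 0 s, ‖g r‖ ≤ C) :
    ‖coshAbel a g s‖ ≤ (∫ r in (0 : ℝ)..s, (Real.cosh s - Real.cosh r) ^ a) * C := by
  rw [← intervalIntegral.integral_mul_const]
  refine intervalIntegral.norm_integral_le_of_norm_le hs (ae_of_all _ fun r hr => ?_)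
    ((intervalIntegrable_cosh_sub_cosh_rpow ha hs).mul_const C)
  have hw := cosh_sub_cosh_rpow_nonneg a hr.1.le hr.2
  rw [norm_mul, Complex.norm_of_nonneg hw]
  exact mul_le_mul_of_nonneg_left (hg r hr) hw

lemma exists_norm_coshAbel_le (ha : -(1 / 2) ≤ a) (hg : Continuous g) (T : ℝ) :
    ∃ C, ∀ s ∈ Icc 0 T, ‖coshAbel a g s‖ ≤ C := by
  obtain ⟨B, hB⟩ := bddAbove_integral_cosh_sub_cosh_rpow ha T
  obtain ⟨C, hC⟩ :=
    (isCompact_Icc (a := 0) (b := T)).exists_bound_of_continuousOn hg.continuousOn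
  refine ⟨B * C, fun s hs => ?_⟩
  calc ‖coshAbel a g s‖ ≤ (∫ r in (0 : ℝ)..s, (Real.cosh s - Real.cosh r) ^ a) * C :=
        norm_coshAbel_le (by linarith) hs.1 fun r hr => hC r ⟨hr.1.le, hr.2.trans hs.2⟩
    _ ≤ B * C :=
        mul_le_mul_of_nonneg_right (hB (mem_image_of_mem _ hs)) ((norm_nonneg _).trans (hC s hs))

lemma reComparable_coshAbel {c s : ℝ} (ha : -1 < a) (hs : 0 ≤ s) (hg : Continuous g)
    (hk : Continuous k) (h : ∀ r ∈ Ioc 0 s, ReComparable c (g r) (k r)) :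
    ReComparable c (coshAbel a g s) (coshAbel a k s) :=
  .intervalIntegral hs (intervalIntegrable_coshAbel ha hg hs)
    (intervalIntegrable_coshAbel ha hk hs) fun r hr =>
      (h r hr).ofReal_mul (cosh_sub_cosh_rpow_nonneg a hr.1.le hr.2)

/-- The double integral `∫₀ᵗ (cosh 2t - cosh 2s)^b (∫₀ˢ (cosh s - cosh r)^a g(r) dr) sinh s ds` of
the Koornwinder formula, with `b = m₂/2 - 1` there. -/
noncomputable def koornwinderIntegral (a b : ℝ) (g : ℝ → ℂ) (t : ℝ) : ℂ :=
  ∫ s in (0 : ℝ)..t, (((Real.cosh (2 * t) - Real.cosh (2 * s)) ^ b : ℝ) : ℂ) * coshAbel a g s *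
    (Real.sinh s : ℝ)

lemma stronglyMeasurable_koornwinderIntegral (a b : ℝ) (hg : Measurable g) :
    StronglyMeasurable (koornwinderIntegral a b g) := by
  have hA : Measurable (coshAbel a g) := (stronglyMeasurable_coshAbel a hg).measurable
  exact stronglyMeasurable_intervalIntegral (Measurable.stronglyMeasurable (by fun_prop))
    measurable_const measurable_id

lemma intervalIntegrable_koornwinderIntegral (ha : -(1 / 2) ≤ a) (hb : -1 < b)
    (hg : Continuous g) {t : ℝ} (ht : 0 ≤ t) :
    IntervalIntegrable (fun s => (((Real.cosh (2 * t) - Real.cosh (2 * s)) ^ b : ℝ) : ℂ) *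
      coshAbel a g s * (Real.sinh s : ℝ)) volume 0 t := by
  have hw : IntervalIntegrable
      (fun s => (((Real.cosh (2 * t) - Real.cosh (2 * s)) ^ b : ℝ) : ℂ)) volume 0 t := by
    have h := (intervalIntegrable_cosh_sub_cosh_rpow hb
      (mul_nonneg zero_le_two ht)).comp_mul_left (c := 2)
    rw [zero_div, mul_div_cancel_left₀ t two_ne_zero] at h
    exact ⟨h.1.ofReal, h.2.ofReal⟩
  obtain ⟨C, hC⟩ := exists_norm_coshAbel_le ha hg t
  refine IntervalIntegrable.mul_continuousOn ?_ (by fun_prop)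
  rw [intervalIntegrable_iff_integrableOn_Ioc_of_le ht] at hw ⊢
  exact hw.mul_bdd (stronglyMeasurable_coshAbel a hg.measurable).aestronglyMeasurable
    (ae_restrict_of_forall_mem measurableSet_Ioc fun s hs => hC s (Ioc_subset_Icc_self hs))

lemma reComparable_koornwinderIntegral {c t : ℝ} (ha : -(1 / 2) ≤ a) (hb : -1 < b) (ht : 0 ≤ t)
    (hg : Continuous g) (hk : Continuous k)
    (h : ∀ r ∈ Ioc 0 t, ReComparable c (g r) (k r)) :
    ReComparable c (koornwinderIntegral a b g t) (koornwinderIntegral a b k t) := by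
  refine .intervalIntegral ht (intervalIntegrable_koornwinderIntegral ha hb hg ht)
    (intervalIntegrable_koornwinderIntegral ha hb hk ht) fun s hs => ?_
  have hinner : ReComparable c (coshAbel a g s) (coshAbel a k s) :=
    reComparable_coshAbel (by linarith) hs.1.le hg hk fun r hr => h r ⟨hr.1, hr.2.trans hs.2⟩
  have hw : 0 ≤ (Real.cosh (2 * t) - Real.cosh (2 * s)) ^ b :=
    cosh_sub_cosh_rpow_nonneg b (by linarith [hs.1]) (by linarith [hs.2])
  exact (hinner.ofReal_mul hw).mul_ofReal (Real.sinh_nonneg_iff.2 hs.1.le)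

end CoshAbel

/-! ### The elementary spherical functions -/

section SphericalFunction

variable {m₁ m₂ : ℕ}

lemma measurable_Δ (m₁ m₂ : ℕ) : Measurable (Δ m₁ m₂) := by
  unfold Δ
  fun_prop

lemma Δ_nonneg (m₁ m₂ : ℕ) {t : ℝ} (ht : 0 ≤ t) : 0 ≤ Δ m₁ m₂ t := by
  have hsinh : 0 ≤ Real.sinh t := Real.sinh_nonneg_iff.2 ht
  have hcosh : 0 < Real.cosh t := Real.cosh_pos t
  exact mul_nonneg (pow_nonneg (mul_nonneg zero_le_two hsinh) _)
    (pow_nonneg (mul_nonneg zero_le_two hcosh.le) _)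

lemma c₀_nonneg (m₁ m₂ : ℕ) : 0 ≤ c₀ m₁ m₂ := by
  have hnum : 0 ≤ Real.Gamma (((m₁ : ℝ) + m₂ + 1 - 1) / 2) :=
    Real.Gamma_nonneg_of_nonneg (by rw [add_sub_cancel_right]; positivity)
  have hden : 0 ≤ Real.Gamma (((m₁ : ℝ) + m₂ + 1) / 2) :=
    Real.Gamma_nonneg_of_nonneg (by positivity)
  exact div_nonneg (mul_nonneg (by positivity) hnum) hden

lemma PhiC_eq_mul_koornwinderIntegral (m₁ m₂ : ℕ) (z : ℂ) (t : ℝ) :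
    PhiC m₁ m₂ z t = ((c₀ m₁ m₂ * Real.sinh (2 * t) / Δ m₁ m₂ t : ℝ) : ℂ) *
      koornwinderIntegral ((m₁ : ℝ) / 2 - 1) ((m₂ : ℝ) / 2 - 1) (fun r => Complex.cos (z * r)) t :=
  rfl

lemma measurable_PhiC (m₁ m₂ : ℕ) (z : ℂ) : Measurable (PhiC m₁ m₂ z) := by
  have hΔ := measurable_Δ m₁ m₂
  have hK := (stronglyMeasurable_koornwinderIntegral ((m₁ : ℝ) / 2 - 1) ((m₂ : ℝ) / 2 - 1)
    (g := fun r => Complex.cos (z * r)) (by fun_prop)).measurable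
  simp only [funext (PhiC_eq_mul_koornwinderIntegral m₁ m₂ z)]
  fun_prop

lemma reComparable_PhiC (hm₁ : 1 ≤ m₁) (hm₂ : 1 ≤ m₂) {c t : ℝ} {z : ℂ} (ht : 0 ≤ t)
    (hc : ∀ r ∈ Ioc 0 t, c ≤ Real.cos (z.re * r)) :
    ReComparable c (PhiC m₁ m₂ z t) (PhiC m₁ m₂ (Complex.I * z.im) t) := by
  have hm₁' : (1 : ℝ) ≤ m₁ := by exact_mod_cast hm₁
  have hm₂' : (1 : ℝ) ≤ m₂ := by exact_mod_cast hm₂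
  have hconst : 0 ≤ c₀ m₁ m₂ * Real.sinh (2 * t) / Δ m₁ m₂ t :=
    div_nonneg (mul_nonneg (c₀_nonneg m₁ m₂) (Real.sinh_nonneg_iff.2 (by linarith)))
      (Δ_nonneg m₁ m₂ ht)
  rw [PhiC_eq_mul_koornwinderIntegral, PhiC_eq_mul_koornwinderIntegral]
  exact (reComparable_koornwinderIntegral (by linarith) (by linarith) ht (by fun_prop)
    (by fun_prop) fun r hr => reComparable_cos_mul (hc r hr)).ofReal_mul hconst

end SphericalFunction

theorem stmt6_general {m₁ m₂ : ℕ} (hm₁ : 1 ≤ m₁) (hm₂ : 1 ≤ m₂) {α c lam q : ℝ}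
    (hc : ∀ r ∈ Ioc 0 α, c ≤ Real.cos (lam * r)) {f : ℝ → ℝ}
    (hf : AEMeasurable f (volume.restrict (Ioc 0 α))) (hf0 : ∀ t ∈ Ioc 0 α, 0 ≤ f t)
    (hint : IntegrableOn
      (fun t => f t * (PhiC m₁ m₂ (Complex.I * q) t).re * Δ m₁ m₂ t) (Ioc 0 α)) :
    c * ∫ t in Ioc 0 α, f t * (PhiC m₁ m₂ (Complex.I * q) t).re * Δ m₁ m₂ t
        ≤ ‖∫ t in Ioc 0 α, (f t : ℂ) * PhiC m₁ m₂ (lam + Complex.I * q) t * (Δ m₁ m₂ t : ℝ)‖ ∧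
      ‖∫ t in Ioc 0 α, (f t : ℂ) * PhiC m₁ m₂ (lam + Complex.I * q) t * (Δ m₁ m₂ t : ℝ)‖
        ≤ ∫ t in Ioc 0 α, f t * (PhiC m₁ m₂ (Complex.I * q) t).re * Δ m₁ m₂ t := by
  have hmeas : AEMeasurable
      (fun t => (f t : ℂ) * PhiC m₁ m₂ (lam + Complex.I * q) t * (Δ m₁ m₂ t : ℝ))
      (volume.restrict (Ioc 0 α)) :=
    (hf.complex_ofReal.mul (measurable_PhiC m₁ m₂ _).aemeasurable).mul
      (measurable_Δ m₁ m₂).complex_ofReal.aemeasurable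
  have hpointwise : ∀ t ∈ Ioc 0 α, ReComparable c
      ((f t : ℂ) * PhiC m₁ m₂ (lam + Complex.I * q) t * (Δ m₁ m₂ t : ℝ))
      ((f t * (PhiC m₁ m₂ (Complex.I * q) t).re * Δ m₁ m₂ t : ℝ) : ℂ) := by
    intro t ht
    have hcos : ∀ r ∈ Ioc 0 t, c ≤ Real.cos (lam * r) := fun r hr =>
      hc r ⟨hr.1, hr.2.trans ht.2⟩
    have hΦ : ReComparable c (PhiC m₁ m₂ (lam + Complex.I * q) t)
        (PhiC m₁ m₂ (Complex.I * q) t) := by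
      simpa using reComparable_PhiC hm₁ hm₂ (z := lam + Complex.I * q) ht.1.le (by simpa using hcos)
    obtain ⟨hnorm, hre⟩ := (hΦ.ofReal_mul (hf0 t ht)).mul_ofReal (Δ_nonneg m₁ m₂ ht.1.le)
    simp only [Complex.re_mul_ofReal, Complex.re_ofReal_mul] at hnorm hre
    exact ⟨hnorm, by simpa using hre⟩
  have htransform := ReComparable.integral hmeas.aestronglyMeasurable hint.ofReal
    (ae_restrict_of_forall_mem measurableSet_Ioc hpointwise)
  rw [_root_.integral_ofReal] at htransform
  obtain ⟨hnorm, hre⟩ := htransform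
  exact ⟨hre.trans (Complex.re_le_norm _), hnorm⟩

/-- For a non-negative radial `f` supported in `(0, α]` and
`|λ| α ≤ θ₀ < π/2`, the spherical transform of `f` at `λ + iρ_p` is comparable to
`∫₀^α f(t) φ_{iρ_p}(a_t) Δ(t) dt`, with explicit constants `cos θ₀` and `1`. -/
theorem stmt6 (m₁ m₂ : ℕ) (hm₁ : 1 ≤ m₁) (hm₂ : 1 ≤ m₂)
    (p : ENNReal) (hp : 1 ≤ p) (α : ℝ) (hα : 0 < α)
    (θ₀ : ℝ) (hθ₀ : 0 < θ₀) (hθ₀' : θ₀ < Real.pi / 2)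
    (f : ℝ → ℝ) (hf : Measurable f) (hf0 : ∀ t, 0 ≤ f t)
    (hsupp : ∀ t, t ∉ Ioc (0:ℝ) α → f t = 0)
    (hint : IntegrableOn
      (fun t => f t * (PhiC m₁ m₂ (Complex.I * (rhoP m₁ m₂ p : ℝ)) t).re * Δ m₁ m₂ t)
      (Ioc 0 α)) :
    ∀ lam : ℝ, |lam| * α ≤ θ₀ →
      Real.cos θ₀ *
          ∫ t in Ioc (0:ℝ) α, f t * (PhiC m₁ m₂ (Complex.I * (rhoP m₁ m₂ p : ℝ)) t).re * Δ m₁ m₂ t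
        ≤ ‖∫ t in Ioc (0:ℝ) α,
            (f t : ℂ) * PhiC m₁ m₂ ((lam : ℂ) + Complex.I * (rhoP m₁ m₂ p : ℝ)) t *
              (Δ m₁ m₂ t : ℝ)‖ ∧
      ‖∫ t in Ioc (0:ℝ) α,
          (f t : ℂ) * PhiC m₁ m₂ ((lam : ℂ) + Complex.I * (rhoP m₁ m₂ p : ℝ)) t *
            (Δ m₁ m₂ t : ℝ)‖
        ≤ ∫ t in Ioc (0:ℝ) α,
            f t * (PhiC m₁ m₂ (Complex.I * (rhoP m₁ m₂ p : ℝ)) t).re * Δ m₁ m₂ t := by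
  exact fun lam hlam => stmt6_general hm₁ hm₂ (fun r hr => cos_le_cos_mul_of_abs_mul_le
    (by linarith) hlam hr) hf.aemeasurable (fun t _ => hf0 t) hint
end

section
/- Let m₁ ≥ 1 and m₂ ≥ 0 be integers, n = m₁ + m₂ + 1, ρ = (m₁ + 2m₂)/2, and let μ_Δ be the measure Δ(t) dt on (0,∞), where Δ(t) = (2 sinh t)^{m₁+m₂} (2 cosh t)^{m₂}. Let κ > 0 and let g(t) = t^{−κ} on (0,∞). Then there exist constants C₁, C₂ > 0 (depending on m₁, m₂, κ) such that the non-increasing rearrangement g* of g with respect to μ_Δ satisfies C₁ t^{−κ/n} ≤ g*(t) ≤ C₂ t^{−κ/n} for 0 < t ≤ e^{2ρ}, and C₁ (log t)^{−κ} ≤ g*(t) ≤ C₂ (log t)^{−κ} for t > e^{2ρ}. -/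
open MeasureTheory Set ENNReal

/-- The measure `Δ(t) dt` on `(0,∞)`, the radial part of the Haar measure. -/
noncomputable def μΔ (m₁ m₂ : ℕ) : Measure ℝ :=
  (volume.restrict (Ioi (0:ℝ))).withDensity (fun t => ENNReal.ofReal (Δ m₁ m₂ t))

/-- The non-increasing rearrangement of `f` with respect to `μ`:
`f*(t) = inf {α : μ({x : |f x| > α}) ≤ t}`. -/
noncomputable def rearr {X : Type*} [MeasurableSpace X] (μ : Measure X)
    (f : X → ℝ) (t : ℝ) : ℝ≥0∞ :=
  sInf {α : ℝ≥0∞ | μ {x | α < ENNReal.ofReal |f x|} ≤ ENNReal.ofReal t}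

/-!
For a nondecreasing density `w` on `(0, ∞)` the mass of `(0, r]` lies between `(r / 2) * w (r / 2)`
and `r * w r`, and `r * w r` shrinks at least linearly when `r` does. So if `t` is comparable to
`r * w r` up to a constant, then, after changing `r` by a constant, `t` becomes an upper or a
lower bound for the mass of `(0, r]`. Since `f = s ^ (-κ)` decreases, the first gives
`f* t ≤ f r` and the second `f r ≤ f* t`, and a constant in `r` is only a constant in `f r`.
For `w = Δ` this reduces everything to estimates of `r * Δ r`: near `0` it is comparable to `r ^ n`,
which gives the radius `t ^ (1 / n)`, and at infinity it lies between `exp r / 2` and a multiple of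
a power of `exp r`, which gives a radius comparable to `log t`.
-/

section Rearrangement

variable {μ : Measure ℝ} {f : ℝ → ℝ} {r t : ℝ}

lemma rearr_le_of_antitoneOn (hμ : μ (Iic 0) = 0) (hf : AntitoneOn f (Ioi 0))
    (hf₀ : ∀ x, 0 < x → 0 ≤ f x) (hr : 0 < r) (h : μ (Ioc 0 r) ≤ ENNReal.ofReal t) :
    rearr μ f t ≤ ENNReal.ofReal (f r) := by
  have superlevel_subset :
      {x | ENNReal.ofReal (f r) < ENNReal.ofReal |f x|} ⊆ Iic 0 ∪ Ioc 0 r := by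
    intro x hx
    rcases le_or_gt x 0 with hx₀ | hx₀
    · exact Or.inl hx₀
    · refine Or.inr ⟨hx₀, le_of_not_ge fun hrx => (mem_ofPred.1 hx).not_ge ?_⟩
      rw [abs_of_nonneg (hf₀ x hx₀)]
      exact ENNReal.ofReal_le_ofReal (hf hr hx₀ hrx)
  refine sInf_le ?_
  calc μ {x | ENNReal.ofReal (f r) < ENNReal.ofReal |f x|}
      ≤ μ (Iic 0 ∪ Ioc 0 r) := measure_mono superlevel_subset
    _ ≤ μ (Iic 0) + μ (Ioc 0 r) := measure_union_le _ _
    _ ≤ ENNReal.ofReal t := by rwa [hμ, zero_add]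

lemma le_rearr_of_antitoneOn (hf : AntitoneOn f (Ioi 0))
    (h : ENNReal.ofReal t < μ (Ioc 0 r)) :
    ENNReal.ofReal (f r) ≤ rearr μ f t := by
  refine le_sInf fun α hα => le_of_not_gt fun hlt => ?_
  have Ioc_subset : Ioc 0 r ⊆ {x | α < ENNReal.ofReal |f x|} := fun x hx =>
    hlt.trans_le <| ENNReal.ofReal_le_ofReal <|
      (hf hx.1 (hx.1.trans_le hx.2) hx.2).trans (le_abs_self _)
  exact (h.trans_le (measure_mono Ioc_subset)).not_ge hα

end Rearrangement

/-- The measure `w(s) ds` on `(0, ∞)`, viewed as a measure on `ℝ`; the negative part of the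
density `w` is discarded. The measure `μΔ m₁ m₂` is the case `w = Δ m₁ m₂`. -/
noncomputable def halfLineMeasure (w : ℝ → ℝ) : Measure ℝ :=
  (volume.restrict (Ioi (0 : ℝ))).withDensity fun s => ENNReal.ofReal (w s)

namespace halfLineMeasure

variable {w : ℝ → ℝ} {κ r t K : ℝ}

lemma apply_Iic_zero (w : ℝ → ℝ) : halfLineMeasure w (Iic 0) = 0 :=
  withDensity_absolutelyContinuous _ _ <| by
    rw [Measure.restrict_apply measurableSet_Iic, Iic_inter_Ioi, Ioc_self, measure_empty]

lemma apply_Ioc (w : ℝ → ℝ) {a : ℝ} (ha : 0 ≤ a) (b : ℝ) :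
    halfLineMeasure w (Ioc a b) = ∫⁻ s in Ioc a b, ENNReal.ofReal (w s) := by
  have Ioc_subset : Ioc a b ⊆ Ioi 0 := fun _ hs => ha.trans_lt hs.1
  rw [halfLineMeasure, withDensity_apply _ measurableSet_Ioc,
    Measure.restrict_restrict_of_subset Ioc_subset]

lemma apply_Ioc_zero_le (hw : MonotoneOn w (Ioi 0)) (hr : 0 < r) :
    halfLineMeasure w (Ioc 0 r) ≤ ENNReal.ofReal (r * w r) :=
  calc halfLineMeasure w (Ioc 0 r)
      = ∫⁻ s in Ioc 0 r, ENNReal.ofReal (w s) := apply_Ioc w le_rfl r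
    _ ≤ ∫⁻ _ in Ioc 0 r, ENNReal.ofReal (w r) :=
        setLIntegral_mono' measurableSet_Ioc fun _ hs =>
          ENNReal.ofReal_le_ofReal (hw hs.1 hr hs.2)
    _ = ENNReal.ofReal (r * w r) := by
        rw [setLIntegral_const, Real.volume_Ioc, sub_zero, mul_comm, ← ENNReal.ofReal_mul hr.le]

lemma le_apply_Ioc_zero_two_mul (hw : MonotoneOn w (Ioi 0)) (hr : 0 < r) :
    ENNReal.ofReal (r * w r) ≤ halfLineMeasure w (Ioc 0 (2 * r)) :=
  calc ENNReal.ofReal (r * w r)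
      = ∫⁻ _ in Ioc r (2 * r), ENNReal.ofReal (w r) := by
        rw [setLIntegral_const, Real.volume_Ioc, two_mul, add_sub_cancel_right, mul_comm,
          ENNReal.ofReal_mul' hr.le]
    _ ≤ ∫⁻ s in Ioc r (2 * r), ENNReal.ofReal (w s) :=
        setLIntegral_mono' measurableSet_Ioc fun _ hs =>
          ENNReal.ofReal_le_ofReal (hw hr (hr.trans hs.1) hs.1.le)
    _ = halfLineMeasure w (Ioc r (2 * r)) := (apply_Ioc w hr.le _).symm
    _ ≤ halfLineMeasure w (Ioc 0 (2 * r)) := measure_mono (Ioc_subset_Ioc_left hr.le)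

lemma apply_Ioc_zero_div_le (hw : MonotoneOn w (Ioi 0)) (hr : 0 < r) (hK : 1 ≤ K)
    (h : r * w r ≤ K * t) :
    halfLineMeasure w (Ioc 0 (r / K)) ≤ ENNReal.ofReal t := by
  have hK₀ : 0 < K := one_pos.trans_le hK
  have hrK : 0 < r / K := div_pos hr hK₀
  refine (apply_Ioc_zero_le hw hrK).trans (ENNReal.ofReal_le_ofReal ?_)
  calc r / K * w (r / K) ≤ r / K * w r := by
        gcongr
        exact hw hrK hr (div_le_self hr.le hK)
    _ = r * w r / K := div_mul_eq_mul_div _ _ _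
    _ ≤ t := (div_le_iff₀' hK₀).2 h

lemma lt_apply_Ioc_zero_mul (hw : MonotoneOn w (Ioi 0)) (hr : 0 < r) (ht : 0 < t) (hK : 1 ≤ K)
    (h : t ≤ K * (r * w r)) :
    ENNReal.ofReal t < halfLineMeasure w (Ioc 0 (4 * K * r)) := by
  have r_le : r ≤ 2 * K * r := le_mul_of_one_le_left hr.le (by linarith)
  have h2Kr : 0 < 2 * K * r := hr.trans_le r_le
  have t_lt : t < 2 * K * r * w (2 * K * r) :=
    calc t < 2 * (K * (r * w r)) := by linarith
      _ = 2 * K * r * w r := by ring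
      _ ≤ 2 * K * r * w (2 * K * r) := by
          gcongr
          exact hw hr h2Kr r_le
  calc ENNReal.ofReal t < ENNReal.ofReal (2 * K * r * w (2 * K * r)) :=
        (ENNReal.ofReal_lt_ofReal_iff (ht.trans t_lt)).2 t_lt
    _ ≤ halfLineMeasure w (Ioc 0 (2 * (2 * K * r))) := le_apply_Ioc_zero_two_mul hw h2Kr
    _ = halfLineMeasure w (Ioc 0 (4 * K * r)) := by congr 2; ring

lemma rearr_rpow_neg_le (hw : MonotoneOn w (Ioi 0)) (hκ : 0 ≤ κ) (hr : 0 < r) (hK : 1 ≤ K)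
    (h : r * w r ≤ K * t) :
    rearr (halfLineMeasure w) (fun s => s ^ (-κ)) t ≤ ENNReal.ofReal ((r / K) ^ (-κ)) :=
  rearr_le_of_antitoneOn (apply_Iic_zero w)
    (Real.antitoneOn_rpow_Ioi_of_exponent_nonpos (neg_nonpos.2 hκ))
    (fun _ hx => Real.rpow_nonneg hx.le _) (div_pos hr (one_pos.trans_le hK))
    (apply_Ioc_zero_div_le hw hr hK h)

lemma le_rearr_rpow_neg (hw : MonotoneOn w (Ioi 0)) (hκ : 0 ≤ κ) (hr : 0 < r) (ht : 0 < t)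
    (hK : 1 ≤ K) (h : t ≤ K * (r * w r)) :
    ENNReal.ofReal ((4 * K * r) ^ (-κ)) ≤ rearr (halfLineMeasure w) (fun s => s ^ (-κ)) t :=
  le_rearr_of_antitoneOn (Real.antitoneOn_rpow_Ioi_of_exponent_nonpos (neg_nonpos.2 hκ))
    (lt_apply_Ioc_zero_mul hw hr ht hK h)

end halfLineMeasure

section Density

variable {m₁ m₂ : ℕ} {r : ℝ}

lemma μΔ_eq_halfLineMeasure (m₁ m₂ : ℕ) : μΔ m₁ m₂ = halfLineMeasure (Δ m₁ m₂) := rfl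

lemma monotoneOn_Δ (m₁ m₂ : ℕ) : MonotoneOn (Δ m₁ m₂) (Ioi 0) := by
  intro s hs r hr hsr
  have sinh_s_nonneg : 0 ≤ Real.sinh s := Real.sinh_nonneg_iff.2 (mem_Ioi.1 hs).le
  have sinh_le : Real.sinh s ≤ Real.sinh r := Real.sinh_le_sinh.2 hsr
  have sinh_r_nonneg : 0 ≤ Real.sinh r := sinh_s_nonneg.trans sinh_le
  have cosh_le : Real.cosh s ≤ Real.cosh r := by
    rwa [Real.cosh_le_cosh, abs_of_pos hs, abs_of_pos hr]
  unfold Δ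
  gcongr

lemma sinh_le_mul_exp (r : ℝ) : Real.sinh r ≤ r * Real.exp r := by
  have exp_neg_eq : Real.exp (-r) = Real.exp r * Real.exp (-(2 * r)) := by
    rw [← Real.exp_add]
    congr 1
    ring
  calc Real.sinh r = (1 - Real.exp (-(2 * r))) / 2 * Real.exp r := by
        rw [Real.sinh_eq, exp_neg_eq]
        ring
    _ ≤ r * Real.exp r := by
        gcongr
        linarith [Real.add_one_le_exp (-(2 * r))]

lemma cosh_le_exp (hr : 0 ≤ r) : Real.cosh r ≤ Real.exp r := by
  have exp_neg_le : Real.exp (-r) ≤ Real.exp r := Real.exp_le_exp.2 (neg_le_self hr)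
  rw [Real.cosh_eq]
  linarith

lemma mul_Δ_le (m₁ m₂ : ℕ) (hr : 0 ≤ r) :
    r * Δ m₁ m₂ r ≤ r ^ (m₁ + m₂ + 1) * (2 * Real.exp r) ^ (m₁ + 2 * m₂) :=
  calc r * Δ m₁ m₂ r
      ≤ r * ((2 * (r * Real.exp r)) ^ (m₁ + m₂) * (2 * Real.exp r) ^ m₂) := by
        unfold Δ
        gcongr r * ((2 * ?_) ^ _ * (2 * ?_) ^ _)
        · exact sinh_le_mul_exp r
        · exact cosh_le_exp hr
    _ = r ^ (m₁ + m₂ + 1) * (2 * Real.exp r) ^ (m₁ + 2 * m₂) := by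
        rw [mul_left_comm, mul_pow]
        ring

lemma mul_Δ_le_exp (m₁ m₂ : ℕ) (hr : 0 ≤ r) :
    r * Δ m₁ m₂ r
      ≤ 2 ^ (m₁ + 2 * m₂) * Real.exp (((2 * m₁ + 3 * m₂ + 1 : ℕ) : ℝ) * r) :=
  calc r * Δ m₁ m₂ r
      ≤ r ^ (m₁ + m₂ + 1) * (2 * Real.exp r) ^ (m₁ + 2 * m₂) := mul_Δ_le m₁ m₂ hr
    _ ≤ Real.exp r ^ (m₁ + m₂ + 1) * (2 * Real.exp r) ^ (m₁ + 2 * m₂) := by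
        gcongr
        linarith [Real.add_one_le_exp r]
    _ = 2 ^ (m₁ + 2 * m₂) * Real.exp (((2 * m₁ + 3 * m₂ + 1 : ℕ) : ℝ) * r) := by
        rw [Real.exp_nat_mul, mul_pow]
        ring

lemma two_mul_sinh_pow_le_Δ (m₁ m₂ : ℕ) (hr : 0 ≤ r) :
    (2 * Real.sinh r) ^ (m₁ + m₂) ≤ Δ m₁ m₂ r :=
  le_mul_of_one_le_right (by positivity)
    (one_le_pow₀ (by linarith [Real.one_le_cosh r]))

lemma pow_le_mul_Δ (m₁ m₂ : ℕ) (hr : 0 ≤ r) : r ^ (m₁ + m₂ + 1) ≤ r * Δ m₁ m₂ r :=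
  calc r ^ (m₁ + m₂ + 1) = r * r ^ (m₁ + m₂) := pow_succ' _ _
    _ ≤ r * (2 * Real.sinh r) ^ (m₁ + m₂) := by
        gcongr
        linarith [Real.self_le_sinh_iff.2 hr]
    _ ≤ r * Δ m₁ m₂ r := by
        gcongr
        exact two_mul_sinh_pow_le_Δ m₁ m₂ hr

lemma exp_le_two_mul_mul_Δ (hm : m₁ + m₂ ≠ 0) (hr : 1 ≤ r) :
    Real.exp r ≤ 2 * (r * Δ m₁ m₂ r) := by
  have hr₀ : 0 ≤ r := zero_le_one.trans hr
  have one_le_two_mul_sinh : 1 ≤ 2 * Real.sinh r := by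
    linarith [Real.self_le_sinh_iff.2 hr₀]
  have exp_le : Real.exp r ≤ 2 * (2 * Real.sinh r) := by
    have two_le_exp : 2 ≤ Real.exp r := by linarith [Real.add_one_le_exp r]
    have exp_neg_le_one : Real.exp (-r) ≤ 1 := Real.exp_le_one_iff.2 (neg_nonpos.2 hr₀)
    rw [Real.sinh_eq]
    linarith
  have sinh_le_Δ : 2 * Real.sinh r ≤ Δ m₁ m₂ r :=
    (le_self_pow₀ one_le_two_mul_sinh hm).trans (two_mul_sinh_pow_le_Δ m₁ m₂ hr₀)
  have Δ_le : Δ m₁ m₂ r ≤ r * Δ m₁ m₂ r := le_mul_of_one_le_left (by linarith) hr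
  linarith

lemma one_le_two_mul_ρ₀ (hm : m₁ + m₂ ≠ 0) : 1 ≤ 2 * ρ₀ m₁ m₂ := by
  have one_le : (1 : ℝ) ≤ (m₁ + 2 * m₂ : ℕ) := Nat.one_le_cast.2 (by lia)
  push_cast at one_le
  unfold ρ₀
  linarith

end Density

section Bounds

variable {m₁ m₂ : ℕ} {κ t T : ℝ}

lemma div_rpow_neg {x y : ℝ} (hx : 0 ≤ x) (hy : 0 ≤ y) (κ : ℝ) :
    (x / y) ^ (-κ) = y ^ κ * x ^ (-κ) := by
  rw [Real.div_rpow hx hy, Real.rpow_neg hy, div_inv_eq_mul, mul_comm]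

lemma rpow_inv_natCast_rpow_neg (ht : 0 ≤ t) (n : ℕ) (κ : ℝ) :
    (t ^ (n⁻¹ : ℝ)) ^ (-κ) = t ^ (-(κ / n)) := by
  rw [← Real.rpow_mul ht]
  congr 1
  ring

lemma le_rearr_μΔ_rpow (m₁ m₂ : ℕ) (hκ : 0 ≤ κ) (ht : 0 < t) :
    ENNReal.ofReal (4 ^ (-κ) * t ^ (-(κ / (m₁ + m₂ + 1 : ℕ))))
      ≤ rearr (μΔ m₁ m₂) (fun s => s ^ (-κ)) t := by
  set u := t ^ (((m₁ + m₂ + 1 : ℕ) : ℝ)⁻¹)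
  have hu₀ : 0 < u := Real.rpow_pos_of_pos ht _
  have t_le : t ≤ 1 * (u * Δ m₁ m₂ u) := by
    rw [one_mul]
    exact (Real.rpow_inv_natCast_pow ht.le (Nat.succ_ne_zero _)).ge.trans
      (pow_le_mul_Δ m₁ m₂ hu₀.le)
  have bound := halfLineMeasure.le_rearr_rpow_neg (monotoneOn_Δ m₁ m₂) hκ hu₀ ht le_rfl t_le
  rwa [mul_one, Real.mul_rpow zero_le_four hu₀.le, rpow_inv_natCast_rpow_neg ht.le,
    ← μΔ_eq_halfLineMeasure] at bound

lemma rearr_μΔ_le_rpow (m₁ m₂ : ℕ) (hκ : 0 ≤ κ) (ht : 0 < t) (htT : t ≤ T) :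
    rearr (μΔ m₁ m₂) (fun s => s ^ (-κ)) t
      ≤ ENNReal.ofReal
        (((2 * Real.exp (T ^ (((m₁ + m₂ + 1 : ℕ) : ℝ)⁻¹))) ^ (m₁ + 2 * m₂)) ^ κ
          * t ^ (-(κ / (m₁ + m₂ + 1 : ℕ)))) := by
  set u := t ^ (((m₁ + m₂ + 1 : ℕ) : ℝ)⁻¹) with hu
  set R := T ^ (((m₁ + m₂ + 1 : ℕ) : ℝ)⁻¹)
  set K := (2 * Real.exp R) ^ (m₁ + 2 * m₂) with hK
  have hu₀ : 0 < u := Real.rpow_pos_of_pos ht _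
  have u_le : u ≤ R := Real.rpow_le_rpow ht.le htT (by positivity)
  have one_le_K : 1 ≤ K :=
    one_le_pow₀ (by linarith [Real.one_le_exp (hu₀.le.trans u_le)])
  have mul_Δ_u_le : u * Δ m₁ m₂ u ≤ K * t :=
    calc u * Δ m₁ m₂ u
        ≤ u ^ (m₁ + m₂ + 1) * (2 * Real.exp u) ^ (m₁ + 2 * m₂) := mul_Δ_le m₁ m₂ hu₀.le
      _ = t * (2 * Real.exp u) ^ (m₁ + 2 * m₂) := by
          rw [hu, Real.rpow_inv_natCast_pow ht.le (Nat.succ_ne_zero _)]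
      _ ≤ t * K := by rw [hK]; gcongr
      _ = K * t := mul_comm _ _
  have bound := halfLineMeasure.rearr_rpow_neg_le (monotoneOn_Δ m₁ m₂) hκ hu₀ one_le_K mul_Δ_u_le
  rwa [div_rpow_neg hu₀.le (zero_le_one.trans one_le_K),
    rpow_inv_natCast_rpow_neg ht.le, ← μΔ_eq_halfLineMeasure] at bound

lemma le_rearr_μΔ_log (hm : m₁ + m₂ ≠ 0) (hκ : 0 ≤ κ) (ht : Real.exp 1 ≤ t) :
    ENNReal.ofReal (8 ^ (-κ) * Real.log t ^ (-κ))
      ≤ rearr (μΔ m₁ m₂) (fun s => s ^ (-κ)) t := by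
  have ht₀ : 0 < t := (Real.exp_pos 1).trans_le ht
  have one_le_log : 1 ≤ Real.log t := (Real.le_log_iff_exp_le ht₀).2 ht
  have log_pos : 0 < Real.log t := one_pos.trans_le one_le_log
  have t_le : t ≤ 2 * (Real.log t * Δ m₁ m₂ (Real.log t)) := by
    simpa only [Real.exp_log ht₀] using exp_le_two_mul_mul_Δ hm one_le_log
  have bound := halfLineMeasure.le_rearr_rpow_neg (monotoneOn_Δ m₁ m₂) hκ log_pos ht₀
    one_le_two t_le
  rwa [show (4 * 2 : ℝ) = 8 by norm_num, Real.mul_rpow (by norm_num) log_pos.le,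
    ← μΔ_eq_halfLineMeasure] at bound

lemma rearr_μΔ_le_log (m₁ m₂ : ℕ) (hκ : 0 ≤ κ) (ht : 1 < t) :
    rearr (μΔ m₁ m₂) (fun s => s ^ (-κ)) t
      ≤ ENNReal.ofReal
        (((2 ^ (m₁ + 2 * m₂)) ^ κ * ((2 * m₁ + 3 * m₂ + 1 : ℕ) : ℝ) ^ κ)
          * Real.log t ^ (-κ)) := by
  set N : ℝ := ((2 * m₁ + 3 * m₂ + 1 : ℕ) : ℝ) with hN
  have hN₀ : 0 < N := Nat.cast_pos.2 (by lia)
  have log_pos : 0 < Real.log t := Real.log_pos ht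
  have hr : 0 < Real.log t / N := div_pos log_pos hN₀
  have one_le_two_pow : (1 : ℝ) ≤ 2 ^ (m₁ + 2 * m₂) := one_le_pow₀ one_le_two
  have r_mul_Δ_le : Real.log t / N * Δ m₁ m₂ (Real.log t / N) ≤ 2 ^ (m₁ + 2 * m₂) * t := by
    simpa only [← hN, mul_div_cancel₀ _ hN₀.ne', Real.exp_log (one_pos.trans ht)]
      using mul_Δ_le_exp m₁ m₂ hr.le
  have bound := halfLineMeasure.rearr_rpow_neg_le (monotoneOn_Δ m₁ m₂) hκ hr
    one_le_two_pow r_mul_Δ_le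
  rwa [div_rpow_neg hr.le (zero_le_one.trans one_le_two_pow), div_rpow_neg log_pos.le hN₀.le,
    ← mul_assoc, ← μΔ_eq_halfLineMeasure] at bound

end Bounds

theorem stmt11_general (m₁ m₂ : ℕ) (hm : m₁ + m₂ ≠ 0) (κ : ℝ) (hκ : 0 ≤ κ)
    (T : ℝ) (hT : Real.exp 1 ≤ T) :
    ∃ C₁ C₂ : ℝ, 0 < C₁ ∧ 0 < C₂ ∧
      (∀ t : ℝ, 0 < t → t ≤ T →
        ENNReal.ofReal (C₁ * t ^ (-(κ / (m₁ + m₂ + 1 : ℕ))))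
          ≤ rearr (μΔ m₁ m₂) (fun s => s ^ (-κ)) t ∧
        rearr (μΔ m₁ m₂) (fun s => s ^ (-κ)) t
          ≤ ENNReal.ofReal (C₂ * t ^ (-(κ / (m₁ + m₂ + 1 : ℕ))))) ∧
      (∀ t : ℝ, T < t →
        ENNReal.ofReal (C₁ * Real.log t ^ (-κ)) ≤ rearr (μΔ m₁ m₂) (fun s => s ^ (-κ)) t ∧
        rearr (μΔ m₁ m₂) (fun s => s ^ (-κ)) t ≤ ENNReal.ofReal (C₂ * Real.log t ^ (-κ))) := by
  set A : ℝ := ((2 * Real.exp (T ^ (((m₁ + m₂ + 1 : ℕ) : ℝ)⁻¹))) ^ (m₁ + 2 * m₂)) ^ κ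
  set B : ℝ := (2 ^ (m₁ + 2 * m₂)) ^ κ * ((2 * m₁ + 3 * m₂ + 1 : ℕ) : ℝ) ^ κ
  refine ⟨8 ^ (-κ), max A B, by positivity, lt_max_of_lt_left (by positivity),
    fun t ht htT => ⟨?_, ?_⟩, fun t hTt => ?_⟩
  · refine le_trans (ENNReal.ofReal_le_ofReal ?_) (le_rearr_μΔ_rpow m₁ m₂ hκ ht)
    gcongr ?_ * _
    exact Real.rpow_le_rpow_of_nonpos four_pos (by norm_num) (neg_nonpos.2 hκ)
  · refine (rearr_μΔ_le_rpow m₁ m₂ hκ ht htT).trans (ENNReal.ofReal_le_ofReal ?_)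
    gcongr
    exact le_max_left A B
  · have exp_one_le : Real.exp 1 ≤ t := hT.trans hTt.le
    have one_lt : 1 < t := (Real.one_lt_exp_iff.2 one_pos).trans_le exp_one_le
    refine ⟨le_rearr_μΔ_log hm hκ exp_one_le,
      (rearr_μΔ_le_log m₁ m₂ hκ one_lt).trans (ENNReal.ofReal_le_ofReal ?_)⟩
    have log_pos := Real.log_pos one_lt
    gcongr
    exact le_max_right A B

/-- rearrangement of the polynomial weight `1/v_κ = t^{-κ}` with
respect to `Δ(t) dt`: it is `≍ t^{-κ/n}` for `t ≤ e^{2ρ}` and `≍ (log t)^{-κ}` for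
`t > e^{2ρ}`, where `n = m₁ + m₂ + 1`. -/
theorem stmt11 (m₁ m₂ : ℕ) (hm₁ : 1 ≤ m₁) (n : ℕ) (hn : n = m₁ + m₂ + 1)
    (κ : ℝ) (hκ : 0 < κ) :
    ∃ C₁ C₂ : ℝ, 0 < C₁ ∧ 0 < C₂ ∧
      (∀ t : ℝ, 0 < t → t ≤ Real.exp (2 * ρ₀ m₁ m₂) →
        ENNReal.ofReal (C₁ * t ^ (-(κ / n))) ≤ rearr (μΔ m₁ m₂) (fun s => s ^ (-κ)) t ∧
        rearr (μΔ m₁ m₂) (fun s => s ^ (-κ)) t ≤ ENNReal.ofReal (C₂ * t ^ (-(κ / n)))) ∧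
      (∀ t : ℝ, Real.exp (2 * ρ₀ m₁ m₂) < t →
        ENNReal.ofReal (C₁ * Real.log t ^ (-κ)) ≤ rearr (μΔ m₁ m₂) (fun s => s ^ (-κ)) t ∧
        rearr (μΔ m₁ m₂) (fun s => s ^ (-κ)) t ≤ ENNReal.ofReal (C₂ * Real.log t ^ (-κ))) := by
  subst hn
  have hm : m₁ + m₂ ≠ 0 := by lia
  exact stmt11_general m₁ m₂ hm κ hκ.le _ (Real.exp_le_exp.2 (one_le_two_mul_ρ₀ hm))
end

section
/- Let m₁ ≥ 1 and m₂ ≥ 0 be integers, n = m₁ + m₂ + 1, ρ = (m₁ + 2m₂)/2, and let μ_Δ be the measure Δ(t) dt on (0,∞), where Δ(t) = (2 sinh t)^{m₁+m₂} (2 cosh t)^{m₂}. Let δ > 0 and let h(t) = e^{−2ρδ t} on (0,∞). Then there exist constants C₁, C₂ > 0 (depending on m₁, m₂, δ) such that the non-increasing rearrangement h* of h with respect to μ_Δ satisfies C₁ ≤ h*(t) ≤ 1 for 0 < t ≤ e^{2ρ}, and C₁ t^{−δ} ≤ h*(t) ≤ C₂ t^{−δ} for t > e^{2ρ}. -/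
open MeasureTheory Set ENNReal

/-!
For a function of decreasing modulus `f`, the rearrangement `f*` is `|f|` composed with the inverse
of the volume function `s ↦ μ (-∞, s]`. The density `Δ s` is at most a constant times `e^{2ρs}`, and
comparable to it away from `0`, so this volume function grows like `e^{2ρs}`; its inverse is
`t ↦ log t / 2ρ` up to a bounded error, and `h` takes that to `t^{-δ}` up to a constant factor.
-/

section Rearrangement

theorem rearr_antitone {X : Type*} [MeasurableSpace X] (μ : Measure X) (f : X → ℝ) :
    Antitone (rearr μ f) :=
  fun _ _ htu => sInf_le_sInf fun _ hα => hα.trans (ENNReal.ofReal_le_ofReal htu)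

variable {X : Type*} [LinearOrder X] [MeasurableSpace X] {μ : Measure X} {f : X → ℝ} {s : X} {t : ℝ}

theorem rearr_le_of_measure_Iio_le (hf : Antitone fun x => |f x|)
    (h : μ (Iio s) ≤ ENNReal.ofReal t) : rearr μ f t ≤ ENNReal.ofReal |f s| :=
  sInf_le <| (measure_mono fun _ hx => (ENNReal.ofReal_mono.comp_antitone hf).reflect_lt hx).trans h

theorem le_rearr_of_lt_measure_Iic (hf : Antitone fun x => |f x|)
    (h : ENNReal.ofReal t < μ (Iic s)) : ENNReal.ofReal |f s| ≤ rearr μ f t := by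
  refine le_sInf fun α hα => le_of_not_gt fun hαs => ?_
  have hsub : Iic s ⊆ {x | α < ENNReal.ofReal |f x|} :=
    fun _ hx => hαs.trans_le (ENNReal.ofReal_le_ofReal (hf hx))
  exact (h.trans_le (measure_mono hsub)).not_ge hα

end Rearrangement

section ExpWeight

variable {μ : Measure ℝ} {a δ s t : ℝ}

theorem exists_exp_mul_eq {y : ℝ} (ha : a ≠ 0) (hy : 0 < y) : ∃ s, Real.exp (a * s) = y :=
  ⟨Real.log y / a, by rw [mul_div_cancel₀ _ ha, Real.exp_log hy]⟩

theorem antitone_abs_exp_neg_mul {b : ℝ} (hb : 0 ≤ b) :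
    Antitone fun s : ℝ => |Real.exp (-(b * s))| := by
  intro x y hxy
  simp only [Real.abs_exp]
  gcongr

theorem abs_exp_neg_mul_eq_rpow (a δ s : ℝ) :
    |Real.exp (-(a * δ * s))| = Real.exp (a * s) ^ (-δ) := by
  rw [Real.abs_exp, ← Real.exp_mul]
  ring_nf

theorem rearr_exp_le (haδ : 0 ≤ a * δ) (h : μ (Iio s) ≤ ENNReal.ofReal t) :
    rearr μ (fun s => Real.exp (-(a * δ * s))) t ≤ ENNReal.ofReal (Real.exp (a * s) ^ (-δ)) :=
  abs_exp_neg_mul_eq_rpow a δ s ▸ rearr_le_of_measure_Iio_le (antitone_abs_exp_neg_mul haδ) h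

theorem le_rearr_exp (haδ : 0 ≤ a * δ) (h : ENNReal.ofReal t < μ (Iic s)) :
    ENNReal.ofReal (Real.exp (a * s) ^ (-δ)) ≤ rearr μ (fun s => Real.exp (-(a * δ * s))) t :=
  abs_exp_neg_mul_eq_rpow a δ s ▸ le_rearr_of_lt_measure_Iic (antitone_abs_exp_neg_mul haδ) h

end ExpWeight

/-- Exponential volume growth of rate `a` for a measure carried by `[0, ∞)`: `μ (-∞, s]` is at most
a multiple of `e^{as}`, and at least a multiple of it for large `s`. There is no lower bound for
small `s`, where the volume may vanish. -/
structure HasExpGrowth (μ : Measure ℝ) (a : ℝ) : Prop where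
  measure_Iio_zero : μ (Iio 0) = 0
  exists_measure_Iic_le : ∃ K > 0, ∀ s, μ (Iic s) ≤ ENNReal.ofReal (K * Real.exp (a * s))
  exists_le_measure_Iic :
    ∃ c > 0, ∀ᶠ s in Filter.atTop, ENNReal.ofReal (c * Real.exp (a * s)) ≤ μ (Iic s)

namespace HasExpGrowth

variable {μ : Measure ℝ} {a δ τ : ℝ}

theorem rearr_exp_le_one (hμ : HasExpGrowth μ a) (haδ : 0 ≤ a * δ) (t : ℝ) :
    rearr μ (fun s => Real.exp (-(a * δ * s))) t ≤ 1 := by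
  simpa using rearr_exp_le (s := 0) (t := t) haδ (by simp [hμ.measure_Iio_zero])

theorem exists_rearr_exp_le (hμ : HasExpGrowth μ a) (ha : 0 < a) (hδ : 0 ≤ δ) :
    ∃ C > 0, ∀ t > 0,
      rearr μ (fun s => Real.exp (-(a * δ * s))) t ≤ ENNReal.ofReal (C * t ^ (-δ)) := by
  obtain ⟨K, hK, hμK⟩ := hμ.exists_measure_Iic_le
  refine ⟨K⁻¹ ^ (-δ), by positivity, fun t ht => ?_⟩
  obtain ⟨s, hs⟩ : ∃ s, Real.exp (a * s) = K⁻¹ * t := exists_exp_mul_eq ha.ne' (by positivity)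
  have hvol : μ (Iio s) ≤ ENNReal.ofReal t :=
    calc μ (Iio s) ≤ μ (Iic s) := measure_mono Iio_subset_Iic_self
      _ ≤ ENNReal.ofReal (K * Real.exp (a * s)) := hμK s
      _ = ENNReal.ofReal t := by rw [hs, mul_inv_cancel_left₀ hK.ne']
  rw [← Real.mul_rpow (by positivity) ht.le, ← hs]
  exact rearr_exp_le (by positivity) hvol

theorem exists_le_rearr_exp (hμ : HasExpGrowth μ a) (ha : 0 < a) (hδ : 0 ≤ δ) (hτ : 0 < τ) :
    ∃ C > 0, ∀ t ≥ τ,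
      ENNReal.ofReal (C * t ^ (-δ)) ≤ rearr μ (fun s => Real.exp (-(a * δ * s))) t := by
  obtain ⟨c, hc, hμc⟩ := hμ.exists_le_measure_Iic
  obtain ⟨s₀, hs₀⟩ := Filter.eventually_atTop.1 hμc
  -- The first entry makes the volume at `s` exceed `t`, the second makes `s ≥ s₀`.
  set M := max (2 / c) (Real.exp (a * s₀) / τ)
  have hM₀ : 0 < M := lt_max_of_lt_left (by positivity)
  refine ⟨M ^ (-δ), by positivity, fun t ht => ?_⟩
  have ht₀ : 0 < t := hτ.trans_le ht
  obtain ⟨s, hs⟩ : ∃ s, Real.exp (a * s) = M * t := exists_exp_mul_eq ha.ne' (by positivity)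
  have hs₀s : s₀ ≤ s := by
    have : Real.exp (a * s₀) ≤ Real.exp (a * s) :=
      calc Real.exp (a * s₀) ≤ M * τ := (div_le_iff₀ hτ).1 (le_max_right _ _)
        _ ≤ M * t := by gcongr
        _ = Real.exp (a * s) := hs.symm
    exact le_of_mul_le_mul_left (Real.exp_le_exp.1 this) ha
  have htc : t < c * Real.exp (a * s) :=
    calc t < 2 * t := by linarith
      _ ≤ M * c * t := by gcongr; exact (div_le_iff₀ hc).1 (le_max_left _ _)
      _ = c * Real.exp (a * s) := by rw [hs]; ring
  have hvol : ENNReal.ofReal t < μ (Iic s) :=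
    ((ENNReal.ofReal_lt_ofReal_iff (by positivity)).2 htc).trans_le (hs₀ s hs₀s)
  rw [← Real.mul_rpow hM₀.le ht₀.le, ← hs]
  exact le_rearr_exp (by positivity) hvol

end HasExpGrowth

theorem stmt12_general {μ : Measure ℝ} {a δ τ : ℝ} (hμ : HasExpGrowth μ a) (ha : 0 < a)
    (hδ : 0 ≤ δ) (hτ : 0 < τ) :
    ∃ C₁ C₂ : ℝ, 0 < C₁ ∧ 0 < C₂ ∧
      (∀ t ≤ τ,
        ENNReal.ofReal C₁ ≤ rearr μ (fun s => Real.exp (-(a * δ * s))) t ∧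
        rearr μ (fun s => Real.exp (-(a * δ * s))) t ≤ 1) ∧
      (∀ t > τ,
        ENNReal.ofReal (C₁ * t ^ (-δ)) ≤ rearr μ (fun s => Real.exp (-(a * δ * s))) t ∧
        rearr μ (fun s => Real.exp (-(a * δ * s))) t ≤ ENNReal.ofReal (C₂ * t ^ (-δ))) := by
  obtain ⟨C, hC, hlower⟩ := hμ.exists_le_rearr_exp ha hδ hτ
  obtain ⟨C₂, hC₂, hupper⟩ := hμ.exists_rearr_exp_le ha hδ
  refine ⟨min C (C * τ ^ (-δ)), C₂, by positivity, hC₂, fun t ht => ⟨?_, ?_⟩, fun t ht => ⟨?_, ?_⟩⟩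
  · calc ENNReal.ofReal (min C (C * τ ^ (-δ)))
        ≤ ENNReal.ofReal (C * τ ^ (-δ)) := ENNReal.ofReal_le_ofReal (min_le_right _ _)
      _ ≤ rearr μ _ τ := hlower τ le_rfl
      _ ≤ rearr μ _ t := rearr_antitone _ _ ht
  · exact hμ.rearr_exp_le_one (by positivity) t
  · have ht₀ : 0 < t := hτ.trans ht
    refine le_trans (ENNReal.ofReal_le_ofReal ?_) (hlower t ht.le)
    gcongr
    exact min_le_left _ _
  · exact hupper t (hτ.trans ht)

section Density

variable {w : ℝ → ℝ} {a K c : ℝ}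

theorem withDensity_Ioi_zero_Iic (g : ℝ → ℝ≥0∞) (s : ℝ) :
    (volume.restrict (Ioi (0 : ℝ))).withDensity g (Iic s) = ∫⁻ x in Ioc 0 s, g x := by
  rw [withDensity_apply _ measurableSet_Iic, Measure.restrict_restrict measurableSet_Iic,
    inter_comm, Ioi_inter_Iic]

theorem setLIntegral_Ioc_zero_le_exp (ha : 0 < a) (hK : 0 ≤ K)
    (hw : ∀ x > 0, w x ≤ K * Real.exp (a * x)) (s : ℝ) :
    ∫⁻ x in Ioc 0 s, ENNReal.ofReal (w x) ≤ ENNReal.ofReal (K / a * Real.exp (a * s)) :=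
  calc ∫⁻ x in Ioc 0 s, ENNReal.ofReal (w x)
      ≤ ∫⁻ x in Ioc 0 s, ENNReal.ofReal (K * Real.exp (a * x)) :=
        setLIntegral_mono' measurableSet_Ioc fun x hx => ENNReal.ofReal_le_ofReal (hw x hx.1)
    _ ≤ ∫⁻ x in Iic s, ENNReal.ofReal (K * Real.exp (a * x)) :=
        lintegral_mono_set Ioc_subset_Iic_self
    _ = ENNReal.ofReal (∫ x in Iic s, K * Real.exp (a * x)) :=
        (ofReal_integral_eq_lintegral_ofReal ((integrableOn_exp_mul_Iic ha s).const_mul K)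
          (.of_forall fun x => by positivity)).symm
    _ = ENNReal.ofReal (K / a * Real.exp (a * s)) := by
        rw [integral_const_mul, integral_exp_mul_Iic ha]
        ring_nf

theorem exp_le_setLIntegral_Ioc_zero {s₀ s : ℝ} (ha : 0 ≤ a) (hc : 0 ≤ c)
    (hw : ∀ x ≥ s₀, c * Real.exp (a * x) ≤ w x) (hs₀ : s₀ + 1 ≤ s) (hs₁ : 1 ≤ s) :
    ENNReal.ofReal (c * Real.exp (-a) * Real.exp (a * s)) ≤
      ∫⁻ x in Ioc 0 s, ENNReal.ofReal (w x) := by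
  have hw_last : ∀ x ∈ Ioc (s - 1) s, c * Real.exp (-a) * Real.exp (a * s) ≤ w x := fun x hx =>
    calc c * Real.exp (-a) * Real.exp (a * s) = c * Real.exp (a * (s - 1)) := by
          rw [mul_assoc, ← Real.exp_add]
          ring_nf
      _ ≤ c * Real.exp (a * x) := by gcongr; exact hx.1.le
      _ ≤ w x := hw x (by linarith [hx.1])
  calc ENNReal.ofReal (c * Real.exp (-a) * Real.exp (a * s))
      = ∫⁻ _ in Ioc (s - 1) s, ENNReal.ofReal (c * Real.exp (-a) * Real.exp (a * s)) := by
        simp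
    _ ≤ ∫⁻ x in Ioc (s - 1) s, ENNReal.ofReal (w x) :=
        setLIntegral_mono' measurableSet_Ioc fun x hx => ENNReal.ofReal_le_ofReal (hw_last x hx)
    _ ≤ ∫⁻ x in Ioc 0 s, ENNReal.ofReal (w x) :=
        lintegral_mono_set (Ioc_subset_Ioc_left (by linarith))

theorem hasExpGrowth_withDensity (ha : 0 < a) (hK : 0 < K) (hc : 0 < c)
    (hwK : ∀ x > 0, w x ≤ K * Real.exp (a * x))
    (hcw : ∀ᶠ x in Filter.atTop, c * Real.exp (a * x) ≤ w x) :
    HasExpGrowth ((volume.restrict (Ioi (0 : ℝ))).withDensity fun x => ENNReal.ofReal (w x)) a where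
  measure_Iio_zero := measure_mono_null Iio_subset_Iic_self (by rw [withDensity_Ioi_zero_Iic]; simp)
  exists_measure_Iic_le := ⟨K / a, by positivity, fun s => by
    rw [withDensity_Ioi_zero_Iic]
    exact setLIntegral_Ioc_zero_le_exp ha hK.le hwK s⟩
  exists_le_measure_Iic := by
    obtain ⟨s₀, hs₀⟩ := Filter.eventually_atTop.1 hcw
    refine ⟨c * Real.exp (-a), by positivity, ?_⟩
    filter_upwards [Filter.eventually_ge_atTop (s₀ + 1), Filter.eventually_ge_atTop 1] with s hs hs₁
    rw [withDensity_Ioi_zero_Iic]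
    exact exp_le_setLIntegral_Ioc_zero ha.le hc.le hs₀ hs hs₁

end Density

section RadialDensity

theorem two_mul_sinh_le_exp (x : ℝ) : 2 * Real.sinh x ≤ Real.exp x := by
  linarith [Real.cosh_add_sinh x, Real.sinh_lt_cosh x]

theorem exp_le_two_mul_cosh (x : ℝ) : Real.exp x ≤ 2 * Real.cosh x := by
  linarith [Real.cosh_add_sinh x, Real.sinh_lt_cosh x]

theorem cosh_le_exp_s12 {x : ℝ} (hx : 0 ≤ x) : Real.cosh x ≤ Real.exp x := by
  linarith [Real.cosh_add_sinh x, Real.sinh_nonneg_iff.2 hx]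

theorem half_exp_le_two_mul_sinh {x : ℝ} (hx : 1 ≤ x) : Real.exp x / 2 ≤ 2 * Real.sinh x := by
  have hexp_neg : Real.exp (-x) ≤ 1 := Real.exp_le_one_iff.2 (by linarith)
  rw [Real.sinh_eq]
  linarith [Real.add_one_le_exp x]

variable {m₁ m₂ : ℕ}

theorem ρ₀_pos (hm : 0 < m₁ + m₂) : 0 < ρ₀ m₁ m₂ := by
  have : (0 : ℝ) < m₁ + m₂ := by exact_mod_cast hm
  unfold ρ₀
  linarith [m₂.cast_nonneg (α := ℝ)]

theorem exp_two_mul_ρ₀_mul (m₁ m₂ : ℕ) (x : ℝ) :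
    Real.exp (2 * ρ₀ m₁ m₂ * x) = Real.exp x ^ (m₁ + m₂) * Real.exp x ^ m₂ := by
  rw [← pow_add, ← Real.exp_nat_mul]
  congr 1
  push_cast [ρ₀]
  ring

theorem Δ_le_exp {x : ℝ} (hx : 0 ≤ x) : Δ m₁ m₂ x ≤ 2 ^ m₂ * Real.exp (2 * ρ₀ m₁ m₂ * x) := by
  have : 0 ≤ Real.sinh x := Real.sinh_nonneg_iff.2 hx
  calc Δ m₁ m₂ x ≤ Real.exp x ^ (m₁ + m₂) * (2 * Real.exp x) ^ m₂ := by
        unfold Δ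
        gcongr
        exacts [two_mul_sinh_le_exp x, cosh_le_exp_s12 hx]
    _ = 2 ^ m₂ * Real.exp (2 * ρ₀ m₁ m₂ * x) := by
        rw [exp_two_mul_ρ₀_mul, mul_pow]
        ring

theorem exp_le_Δ {x : ℝ} (hx : 1 ≤ x) :
    (1 / 2) ^ (m₁ + m₂) * Real.exp (2 * ρ₀ m₁ m₂ * x) ≤ Δ m₁ m₂ x :=
  calc (1 / 2) ^ (m₁ + m₂) * Real.exp (2 * ρ₀ m₁ m₂ * x)
      = (Real.exp x / 2) ^ (m₁ + m₂) * Real.exp x ^ m₂ := by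
        rw [exp_two_mul_ρ₀_mul, div_eq_mul_one_div (Real.exp x), mul_pow]
        ring
    _ ≤ Δ m₁ m₂ x := by
        unfold Δ
        gcongr
        exacts [half_exp_le_two_mul_sinh hx, exp_le_two_mul_cosh x]

theorem hasExpGrowth_μΔ (hm : 0 < m₁ + m₂) : HasExpGrowth (μΔ m₁ m₂) (2 * ρ₀ m₁ m₂) :=
  hasExpGrowth_withDensity (mul_pos two_pos (ρ₀_pos hm)) (K := 2 ^ m₂) (c := (1 / 2) ^ (m₁ + m₂))
    (by positivity) (by positivity) (fun _ hx => Δ_le_exp hx.le)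
    (Filter.eventually_atTop.2 ⟨1, fun _ hx => exp_le_Δ hx⟩)

end RadialDensity

/-- rearrangement of the exponential weight `1/ω_δ = e^{-2ρδt}` with
respect to `Δ(t) dt`: it is `≍ 1` for `t ≤ e^{2ρ}` and `≍ t^{-δ}` for `t > e^{2ρ}`. -/
theorem stmt12 (m₁ m₂ : ℕ) (hm₁ : 1 ≤ m₁) (n : ℕ) (hn : n = m₁ + m₂ + 1)
    (δ : ℝ) (hδ : 0 < δ) :
    ∃ C₁ C₂ : ℝ, 0 < C₁ ∧ 0 < C₂ ∧
      (∀ t : ℝ, 0 < t → t ≤ Real.exp (2 * ρ₀ m₁ m₂) →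
        ENNReal.ofReal C₁ ≤ rearr (μΔ m₁ m₂) (fun s => Real.exp (-(2 * ρ₀ m₁ m₂ * δ * s))) t ∧
        rearr (μΔ m₁ m₂) (fun s => Real.exp (-(2 * ρ₀ m₁ m₂ * δ * s))) t ≤ 1) ∧
      (∀ t : ℝ, Real.exp (2 * ρ₀ m₁ m₂) < t →
        ENNReal.ofReal (C₁ * t ^ (-δ)) ≤
          rearr (μΔ m₁ m₂) (fun s => Real.exp (-(2 * ρ₀ m₁ m₂ * δ * s))) t ∧
        rearr (μΔ m₁ m₂) (fun s => Real.exp (-(2 * ρ₀ m₁ m₂ * δ * s))) t ≤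
          ENNReal.ofReal (C₂ * t ^ (-δ))) := by
  have hm : 0 < m₁ + m₂ := Nat.add_pos_left hm₁ m₂
  obtain ⟨C₁, C₂, hC₁, hC₂, hsmall, hlarge⟩ :=
    stmt12_general (hasExpGrowth_μΔ hm) (mul_pos two_pos (ρ₀_pos hm)) hδ.le (Real.exp_pos _)
  exact ⟨C₁, C₂, hC₁, hC₂, fun t _ => hsmall t, hlarge⟩
end
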